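/- Let m ≥ 3 be an integer and 2 ≤ p < ∞. There is a constant C (depending on m and p) such that for every locally absolutely continuous z : (0,∞) → ℂ with ‖z‖_X < ∞, with z' and z/ρ in L^p(ρ dρ), and satisfying the orthogonality condition ∫₀^∞ z(ρ) h₁(ρ) ρ dρ = 0, one has ‖ |z'| + |z|/ρ ‖_{L^p(ρ dρ)} ≤ C ‖L₀ z‖_{L^p(ρ dρ)}. -/

import Mathlib

open MeasureTheory Set Real Filter
open scoped ENNReal

noncomputable section

abbrev V3 := Fin 3 → ℝ
abbrev V2 := Fin 2 → ℝ

/-- cross product in ℝ³ -/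
def cross3 (a b : V3) : V3 :=
  ![a 1 * b 2 - a 2 * b 1, a 2 * b 0 - a 0 * b 2, a 0 * b 1 - a 1 * b 0]

/-- dot product in ℝ³ -/
def dot3 (a b : V3) : ℝ := a 0 * b 0 + a 1 * b 1 + a 2 * b 2

/-- squared euclidean norm in ℝ³ -/
def nsq3 (a : V3) : ℝ := a 0 ^ 2 + a 1 ^ 2 + a 2 ^ 2

/-- the generator R of rotations about the x₃-axis -/
def Rv (a : V3) : V3 := ![-a 1, a 0, 0]

/-- the rotation e^{αR} about the x₃-axis -/
def rotZ (α : ℝ) (a : V3) : V3 :=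
  ![Real.cos α * a 0 - Real.sin α * a 1, Real.sin α * a 0 + Real.cos α * a 1, a 2]

def kHat : V3 := ![0, 0, 1]
def negkHat : V3 := ![0, 0, -1]
def jHat : V3 := ![0, 1, 0]

/-- first component of the harmonic map profile -/
def h1f (m : ℕ) (r : ℝ) : ℝ := 2 / (r ^ (m : ℤ) + r ^ (-(m : ℤ)))

/-- third component of the harmonic map profile -/
def h3f (m : ℕ) (r : ℝ) : ℝ := (r ^ (m : ℤ) - r ^ (-(m : ℤ))) / (r ^ (m : ℤ) + r ^ (-(m : ℤ)))

/-- the harmonic map profile h -/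
def hProf (m : ℕ) (r : ℝ) : V3 := ![h1f m r, 0, h3f m r]

/-- the r-derivative of the harmonic map profile -/
def dhProf (m : ℕ) (r : ℝ) : V3 :=
  ![-((m : ℝ) / r) * h1f m r * h3f m r, 0, ((m : ℝ) / r) * (h1f m r) ^ 2]

/-- profile of the harmonic map e^{(mθ+α)R} h(r/s) -/
def harmP (m : ℕ) (s α : ℝ) (r : ℝ) : V3 := rotZ α (hProf m (r / s))

/-- its r-derivative -/
def dharmP (m : ℕ) (s α : ℝ) (r : ℝ) : V3 := fun i => (1 / s) * rotZ α (dhProf m (r / s)) i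

/-- `v` is locally absolutely continuous on (0,∞), with a.e. derivative `dv`. -/
def LocAC (v dv : ℝ → V3) : Prop :=
  (∀ a b : ℝ, 0 < a → a ≤ b → ∀ i, IntervalIntegrable (fun r => dv r i) volume a b) ∧
  (∀ a b : ℝ, 0 < a → a ≤ b → ∀ i, v b i - v a i = ∫ r in a..b, dv r i)

/-- energy density (w.r.t. dr) of the m-equivariant map with profile (v,dv) -/
def eDen (m : ℕ) (v dv : ℝ → V3) (r : ℝ) : ℝ :=
  (nsq3 (dv r) + ((m : ℝ) ^ 2 / r ^ 2) * ((v r 0) ^ 2 + (v r 1) ^ 2)) * r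

/-- the energy E(u) = (1/2)∫|∇u|² of the m-equivariant map with profile (v,dv) -/
def energy (m : ℕ) (v dv : ℝ → V3) : ℝ := π * ∫ r in Ioi (0:ℝ), eDen m v dv r

/-- membership in the class Σ_m, expressed in terms of the profile (v,dv) -/
def InSigma (m : ℕ) (v dv : ℝ → V3) : Prop :=
  LocAC v dv ∧ (∀ r ∈ Ioi (0:ℝ), nsq3 (v r) = 1) ∧
  IntegrableOn (eDen m v dv) (Ioi (0:ℝ)) ∧
  Tendsto v (nhdsWithin 0 (Ioi 0)) (nhds negkHat) ∧
  Tendsto v atTop (nhds kHat)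

/-- squared Ḣ¹(ℝ²) distance between the m-equivariant maps with profiles (v,dv), (w,dw) -/
def dH1sq (m : ℕ) (v dv w dw : ℝ → V3) : ℝ :=
  2 * π * ∫ r in Ioi (0:ℝ),
    (nsq3 (fun i => dv r i - dw r i)
      + ((m : ℝ) ^ 2 / r ^ 2) * ((v r 0 - w r 0) ^ 2 + (v r 1 - w r 1) ^ 2)) * r

/-- Ḣ¹(ℝ²) distance -/
def dH1 (m : ℕ) (v dv w dw : ℝ → V3) : ℝ := Real.sqrt (dH1sq m v dv w dw)

/-- the polar angle of a point of ℝ² -/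
def angleOf (x : V2) : ℝ := Complex.arg ⟨x 0, x 1⟩

/-- the radius of a point of ℝ² -/
def radOf (x : V2) : ℝ := Real.sqrt ((x 0) ^ 2 + (x 1) ^ 2)

/-- the m-equivariant map u(r,θ) = e^{mθR} v(r) -/
def eqMap (m : ℕ) (v : ℝ → V3) (x : V2) : V3 := rotZ ((m : ℝ) * angleOf x) (v (radOf x))

/-- the spatial gradient ∂_j u of the m-equivariant map with profile (v,dv) -/
def eqGrad (m : ℕ) (v dv : ℝ → V3) (x : V2) (j : Fin 2) : V3 :=
  rotZ ((m : ℝ) * angleOf x) (fun i =>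
    (x j / radOf x) * dv (radOf x) i
      + ((m : ℝ) * (if j = 0 then -(x 1) else x 0) / radOf x ^ 2) * Rv (v (radOf x)) i)

/-- weak (distributional) form of the Schrödinger map equation ∂ₜu = u × Δu on the time
interval I, for the m-equivariant map with time-dependent profile (v,dv):
∫∫ { u·φ_t - Σ_j (u × ∂_j u)·∂_j φ } dx dt = 0 for all C¹ compactly supported φ. -/
def WeakSM (m : ℕ) (I : Set ℝ) (v dv : ℝ → ℝ → V3) : Prop :=
  ∀ φ : ℝ → V2 → V3,
    (∀ i, ContDiff ℝ 1 (fun q : ℝ × V2 => φ q.1 q.2 i)) →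
    (∀ i, HasCompactSupport (fun q : ℝ × V2 => φ q.1 q.2 i)) →
    (∀ t, t ∉ interior I → ∀ x, φ t x = 0) →
    (∫ t in I, ∫ x : V2,
      (dot3 (eqMap m (v t) x) (fun i => deriv (fun τ => φ τ x i) t)
        - ∑ j : Fin 2, dot3 (cross3 (eqMap m (v t) x) (eqGrad m (v t) (dv t) x j))
            (fun i => fderiv ℝ (fun y => φ t y i) x (Pi.single j 1)))) = 0

/-- continuity in t of the map t ↦ u(t) with respect to the Ḣ¹ distance, on I -/
def H1Cont (m : ℕ) (I : Set ℝ) (v dv : ℝ → ℝ → V3) : Prop :=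
  ∀ t₀ ∈ I, ∀ ε > (0:ℝ), ∃ η > (0:ℝ), ∀ t ∈ I, |t - t₀| < η →
    dH1 m (v t) (dv t) (v t₀) (dv t₀) < ε

/-- a weak solution of the Schrödinger map equation in the class C(I; Σ_m), with
initial profile v₀ -/
def SolClass (m : ℕ) (I : Set ℝ) (v dv : ℝ → ℝ → V3) (v₀ : ℝ → V3) : Prop :=
  (∀ r ∈ Ioi (0:ℝ), v 0 r = v₀ r) ∧ WeakSM m I v dv ∧
  (∀ t ∈ I, InSigma m (v t) (dv t)) ∧ H1Cont m I v dv

/-- the profile of Δu for the m-equivariant map u with profile (v,dv,ddv):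
Δu = e^{mθR}( v_rr + v_r/r + (m²/r²) R² v ) -/
def lapP (m : ℕ) (v dv ddv : ℝ → V3) (r : ℝ) : V3 := fun i =>
  ddv r i + dv r i / r + ((m : ℝ) ^ 2 / r ^ 2) * (![-(v r 0), -(v r 1), 0] : V3) i

/-- squared Ḣ² distance (via the Laplacian) -/
def dH2sq (m : ℕ) (v dv ddv w dw ddw : ℝ → V3) : ℝ :=
  2 * π * ∫ r in Ioi (0:ℝ), nsq3 (fun i => lapP m v dv ddv r i - lapP m w dw ddw r i) * r


/-- `z` is locally absolutely continuous on (0,∞), with a.e. derivative `dz`. -/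
def LocACC (z dz : ℝ → ℂ) : Prop :=
  (∀ a b : ℝ, 0 < a → a ≤ b → IntervalIntegrable dz volume a b) ∧
  (∀ a b : ℝ, 0 < a → a ≤ b → z b - z a = ∫ ρ in a..b, dz ρ)

/-- the density (w.r.t. dρ) of the squared X-norm: (|z'|² + |z|²/ρ²) ρ -/
def xDen (z dz : ℝ → ℂ) (ρ : ℝ) : ℝ := (‖dz ρ‖ ^ 2 + ‖z ρ‖ ^ 2 / ρ ^ 2) * ρ

/-- the X-norm ‖z‖_X = (∫ (|z'|² + |z|²/ρ²) ρ dρ)^{1/2} -/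
def normX (z dz : ℝ → ℂ) : ℝ := Real.sqrt (∫ ρ in Ioi (0:ℝ), xDen z dz ρ)

/-- the operator L₀ = ∂_ρ + (m/ρ) h₃(ρ) -/
def L0op (m : ℕ) (z dz : ℝ → ℂ) (ρ : ℝ) : ℂ :=
  dz ρ + ((((m : ℝ) / ρ) * h3f m ρ : ℝ) : ℂ) * z ρ

/-!
The function `v = 1 / h₁` is an integrating factor for `L₀`: it satisfies `v' = (m / ρ) h₃ v`, so
`v(ρ) z(ρ) - v(s) z(s)` is the integral of `v L₀z` from `s` to `ρ`. Averaging this identity in `s`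
against `h₁(s)² s ds` removes the term `v(s) z(s)`, since `h₁² v = h₁` and `z` is orthogonal to
`h₁`. After Fubini, `|z(ρ)| / ρ` is at most a constant times
`∫ min (t / ρ³) (1 / t²) |L₀z(t)| t dt`, and Schur's test with the weight `ρ ^ (-1 / p)` shows that
this kernel is bounded on `L^p(ρ dρ)`. The bound on `z'` then follows from
`z' = L₀z - (m / ρ) h₃ z` and `|h₃| ≤ 1`.
-/

section PositiveKernels

variable {α β : Type*} [MeasurableSpace α] [MeasurableSpace β] {μ : Measure α} {ν : Measure β}

theorem lintegral_mul_rpow_le_weighted {p : ℝ} (hp : 1 ≤ p) {k w g : β → ℝ≥0∞}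
    (hk : AEMeasurable k ν) (hw : AEMeasurable w ν) (hg : AEMeasurable g ν)
    (hw_zero : ∀ᵐ y ∂ν, w y ≠ 0) (hw_top : ∀ᵐ y ∂ν, w y ≠ ∞) :
    (∫⁻ y, k y * g y ∂ν) ^ p
      ≤ (∫⁻ y, k y * w y ∂ν) ^ (p - 1) * ∫⁻ y, k y * (w y ^ (1 - p) * g y ^ p) ∂ν := by
  have hp_pos : 0 < p := by linarith
  have hinv : 1 / p ≤ 1 := by rwa [div_le_one hp_pos]
  have hsplit : ∀ᵐ y ∂ν, k y * g y
      = (k y * w y) ^ (1 - 1 / p) * (k y * (w y ^ (1 - p) * g y ^ p)) ^ (1 / p) := by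
    filter_upwards [hw_zero, hw_top] with y hy_zero hy_top
    have hk_pow : k y ^ (1 - 1 / p) * k y ^ (1 / p) = k y := by
      rw [← ENNReal.rpow_add_of_nonneg _ _ (by linarith) (by positivity), sub_add_cancel,
        ENNReal.rpow_one]
    have hw_pow : w y ^ (1 - 1 / p) * (w y ^ (1 - p)) ^ (1 / p) = 1 := by
      rw [← ENNReal.rpow_mul, ← ENNReal.rpow_add _ _ hy_zero hy_top,
        show 1 - 1 / p + (1 - p) * (1 / p) = 0 by field_simp; ring, ENNReal.rpow_zero]
    have hg_pow : (g y ^ p) ^ (1 / p) = g y := by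
      rw [one_div, ENNReal.rpow_rpow_inv hp_pos.ne']
    rw [ENNReal.mul_rpow_of_nonneg _ _ (by linarith),
      ENNReal.mul_rpow_of_nonneg _ _ (by positivity),
      ENNReal.mul_rpow_of_nonneg _ _ (by positivity), hg_pow]
    calc k y * g y
        = (k y ^ (1 - 1 / p) * k y ^ (1 / p)) * (w y ^ (1 - 1 / p) * (w y ^ (1 - p)) ^ (1 / p))
            * g y := by rw [hk_pow, hw_pow, mul_one]
      _ = _ := by ring
  calc (∫⁻ y, k y * g y ∂ν) ^ p
      ≤ ((∫⁻ y, k y * w y ∂ν) ^ (1 - 1 / p)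
          * (∫⁻ y, k y * (w y ^ (1 - p) * g y ^ p) ∂ν) ^ (1 / p)) ^ p := by
        rw [lintegral_congr_ae hsplit]
        gcongr
        exact ENNReal.lintegral_mul_norm_pow_le (hk.mul hw)
          (hk.mul ((hw.pow_const _).mul (hg.pow_const _))) (by linarith) (by positivity)
          (sub_add_cancel _ _)
    _ = _ := by
        rw [ENNReal.mul_rpow_of_nonneg _ _ hp_pos.le, ← ENNReal.rpow_mul, ← ENNReal.rpow_mul,
          one_div_mul_cancel hp_pos.ne', ENNReal.rpow_one, sub_mul, one_mul,
          one_div_mul_cancel hp_pos.ne']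

theorem lintegral_rpow_lintegral_mul_le_of_schur [SFinite μ] [SFinite ν] {p : ℝ} (hp : 1 ≤ p)
    {k : α → β → ℝ≥0∞} (hk : Measurable (Function.uncurry k)) {u : α → ℝ≥0∞} {w g : β → ℝ≥0∞}
    (hu : AEMeasurable u μ) (hw : AEMeasurable w ν) (hg : AEMeasurable g ν)
    (hw_zero : ∀ᵐ y ∂ν, w y ≠ 0) (hw_top : ∀ᵐ y ∂ν, w y ≠ ∞) {A B : ℝ≥0∞}
    (hA : ∀ᵐ x ∂μ, ∫⁻ y, k x y * w y ∂ν ≤ A * u x)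
    (hB : ∀ᵐ y ∂ν, ∫⁻ x, k x y * u x ^ (p - 1) ∂μ ≤ B * w y ^ (p - 1)) :
    ∫⁻ x, (∫⁻ y, k x y * g y ∂ν) ^ p ∂μ ≤ A ^ (p - 1) * B * ∫⁻ y, g y ^ p ∂ν := by
  have hp' : 0 ≤ p - 1 := by linarith
  have hk_fst (x : α) : Measurable (k x) := hk.comp measurable_prodMk_left
  have hku (y : β) : AEMeasurable (fun x => k x y * u x ^ (p - 1)) μ :=
    (hk.comp measurable_prodMk_right).aemeasurable.mul (hu.pow_const _)
  set G : β → ℝ≥0∞ := fun y => w y ^ (1 - p) * g y ^ p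
  have hG : AEMeasurable G ν := (hw.pow_const _).mul (hg.pow_const _)
  have hkG (x : α) : AEMeasurable (fun y => k x y * G y) ν := (hk_fst x).aemeasurable.mul hG
  calc ∫⁻ x, (∫⁻ y, k x y * g y ∂ν) ^ p ∂μ
      ≤ ∫⁻ x, A ^ (p - 1) * ∫⁻ y, u x ^ (p - 1) * (k x y * G y) ∂ν ∂μ := by
        refine lintegral_mono_ae (hA.mono fun x hx => ?_)
        rw [lintegral_const_mul'' _ (hkG x), ← mul_assoc,
          ← ENNReal.mul_rpow_of_nonneg _ _ hp']
        refine (lintegral_mul_rpow_le_weighted hp (hk_fst x).aemeasurable hw hg hw_zero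
          hw_top).trans ?_
        gcongr
    _ = A ^ (p - 1) * ∫⁻ y, (∫⁻ x, k x y * u x ^ (p - 1) ∂μ) * G y ∂ν := by
        have hmeas : AEMeasurable
            (Function.uncurry fun x y => u x ^ (p - 1) * (k x y * G y)) (μ.prod ν) :=
          (hu.comp_fst.pow_const _).mul (hk.aemeasurable.mul hG.comp_snd)
        have hmeas_inner : AEMeasurable (fun x => ∫⁻ y, u x ^ (p - 1) * (k x y * G y) ∂ν) μ :=
          hmeas.lintegral_prod_right'
        rw [lintegral_const_mul'' _ hmeas_inner, lintegral_lintegral_swap hmeas]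
        congr 1
        refine lintegral_congr fun y => ?_
        rw [← lintegral_mul_const'' _ (hku y)]
        exact lintegral_congr fun x => by ring
    _ ≤ A ^ (p - 1) * ∫⁻ y, B * g y ^ p ∂ν := by
        refine mul_le_mul_right (lintegral_mono_ae ?_) _
        filter_upwards [hB, hw_zero, hw_top] with y hy hy_zero hy_top
        calc (∫⁻ x, k x y * u x ^ (p - 1) ∂μ) * G y
            ≤ B * w y ^ (p - 1) * (w y ^ (1 - p) * g y ^ p) := by gcongr
          _ = B * (w y ^ (p - 1) * w y ^ (1 - p)) * g y ^ p := by ring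
          _ = B * g y ^ p := by
              rw [← ENNReal.rpow_add _ _ hy_zero hy_top, show p - 1 + (1 - p) = 0 by ring,
                ENNReal.rpow_zero, mul_one]
    _ = A ^ (p - 1) * B * ∫⁻ y, g y ^ p ∂ν := by
        rw [lintegral_const_mul'' _ (hg.pow_const _), mul_assoc]

theorem lintegral_mul_setLIntegral_swap [SFinite μ] [SFinite ν] {E : Set (α × β)}
    (hE : MeasurableSet E) {w : α → ℝ≥0∞} {g : β → ℝ≥0∞} (hw : AEMeasurable w μ)
    (hg : AEMeasurable g ν) :
    ∫⁻ x, w x * ∫⁻ y in {y | (x, y) ∈ E}, g y ∂ν ∂μ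
      = ∫⁻ y, g y * ∫⁻ x in {x | (x, y) ∈ E}, w x ∂μ ∂ν := by
  have hmeas : AEMeasurable
      (Function.uncurry fun x y => E.indicator (fun q => w q.1 * g q.2) (x, y)) (μ.prod ν) :=
    (hw.comp_fst.mul hg.comp_snd).indicator hE
  have hleft (x : α) : w x * ∫⁻ y in {y | (x, y) ∈ E}, g y ∂ν
      = ∫⁻ y, E.indicator (fun q => w q.1 * g q.2) (x, y) ∂ν := by
    have hEx : MeasurableSet {y | (x, y) ∈ E} := measurable_prodMk_left hE
    rw [← lintegral_const_mul'' _ hg.restrict, ← lintegral_indicator hEx]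
    rfl
  have hright (y : β) : g y * ∫⁻ x in {x | (x, y) ∈ E}, w x ∂μ
      = ∫⁻ x, E.indicator (fun q => w q.1 * g q.2) (x, y) ∂μ := by
    have hEy : MeasurableSet {x | (x, y) ∈ E} := measurable_prodMk_right hE
    rw [mul_comm, ← lintegral_mul_const'' _ hw.restrict, ← lintegral_indicator hEy]
    rfl
  simp only [hleft, hright]
  exact lintegral_lintegral_swap hmeas

end PositiveKernels

section PowerIntegrals

theorem setLIntegral_Ioc_ofReal_le_of_le_rpow {F : ℝ → ℝ} {a r x : ℝ} (ha : 0 ≤ a) (hr : -1 < r)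
    (hx : 0 ≤ x) (hF : ∀ y ∈ Ioc 0 x, F y ≤ a * y ^ r) :
    ∫⁻ y in Ioc 0 x, ENNReal.ofReal (F y) ≤ ENNReal.ofReal (a * (x ^ (r + 1) / (r + 1))) := by
  have hint : IntegrableOn (fun y : ℝ => a * y ^ r) (Ioc 0 x) :=
    ((intervalIntegrable_iff_integrableOn_Ioc_of_le hx).1
      (intervalIntegral.intervalIntegrable_rpow' hr)).const_mul a
  calc ∫⁻ y in Ioc 0 x, ENNReal.ofReal (F y)
      ≤ ∫⁻ y in Ioc 0 x, ENNReal.ofReal (a * y ^ r) :=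
        setLIntegral_mono' measurableSet_Ioc fun y hy => ENNReal.ofReal_le_ofReal (hF y hy)
    _ = ENNReal.ofReal (∫ y in Ioc 0 x, a * y ^ r) :=
        (ofReal_integral_eq_lintegral_ofReal hint <| (ae_restrict_iff' measurableSet_Ioc).2 <|
          .of_forall fun y hy => mul_nonneg ha (rpow_nonneg hy.1.le r)).symm
    _ = _ := by
        rw [integral_const_mul, ← intervalIntegral.integral_of_le hx, integral_rpow (Or.inl hr),
          zero_rpow (by linarith), sub_zero]

theorem setLIntegral_Ioi_ofReal_le_of_le_rpow {F : ℝ → ℝ} {a r x : ℝ} (ha : 0 ≤ a) (hr : r < -1)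
    (hx : 0 < x) (hF : ∀ y ∈ Ioi x, F y ≤ a * y ^ r) :
    ∫⁻ y in Ioi x, ENNReal.ofReal (F y) ≤ ENNReal.ofReal (a * (-x ^ (r + 1) / (r + 1))) := by
  have hint : IntegrableOn (fun y : ℝ => a * y ^ r) (Ioi x) :=
    (integrableOn_Ioi_rpow_of_lt hr hx).const_mul a
  calc ∫⁻ y in Ioi x, ENNReal.ofReal (F y)
      ≤ ∫⁻ y in Ioi x, ENNReal.ofReal (a * y ^ r) :=
        setLIntegral_mono' measurableSet_Ioi fun y hy => ENNReal.ofReal_le_ofReal (hF y hy)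
    _ = ENNReal.ofReal (∫ y in Ioi x, a * y ^ r) :=
        (ofReal_integral_eq_lintegral_ofReal hint <| (ae_restrict_iff' measurableSet_Ioi).2 <|
          .of_forall fun y hy => mul_nonneg ha (rpow_nonneg (hx.trans hy).le r)).symm
    _ = _ := by rw [integral_const_mul, integral_Ioi_rpow_of_lt hr hx]

theorem setLIntegral_Ioi_zero_ofReal_le_of_le_rpow {F : ℝ → ℝ} {a b r s x : ℝ} (ha : 0 ≤ a)
    (hb : 0 ≤ b) (hr : -1 < r) (hs : s < -1) (hx : 0 < x)
    (hF_low : ∀ y ∈ Ioc 0 x, F y ≤ a * y ^ r) (hF_high : ∀ y ∈ Ioi x, F y ≤ b * y ^ s) :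
    ∫⁻ y in Ioi 0, ENNReal.ofReal (F y)
      ≤ ENNReal.ofReal (a * (x ^ (r + 1) / (r + 1)) + b * (-x ^ (s + 1) / (s + 1))) := by
  have hr' : 0 < r + 1 := by linarith
  have hs' : s + 1 ≤ 0 := by linarith
  rw [← Ioc_union_Ioi_eq_Ioi hx.le, ENNReal.ofReal_add (by positivity)
    (mul_nonneg hb (div_nonneg_of_nonpos (neg_nonpos.2 (by positivity)) hs'))]
  exact (lintegral_union_le _ _ _).trans (add_le_add
    (setLIntegral_Ioc_ofReal_le_of_le_rpow ha hr hx.le hF_low)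
    (setLIntegral_Ioi_ofReal_le_of_le_rpow hb hs hx hF_high))

end PowerIntegrals

section RadialMeasure

/-- The radial part `ρ dρ` of planar Lebesgue measure, carried by `(0, ∞)`. -/
def radialMeasure : Measure ℝ :=
  (volume.restrict (Ioi 0)).withDensity ENNReal.ofReal

instance : SFinite radialMeasure := by
  unfold radialMeasure
  infer_instance

theorem radialMeasure_absolutelyContinuous : radialMeasure ≪ volume.restrict (Ioi 0) :=
  withDensity_absolutelyContinuous _ _

theorem ae_radialMeasure_iff {P : ℝ → Prop} :
    (∀ᵐ ρ ∂radialMeasure, P ρ) ↔ ∀ᵐ ρ ∂volume.restrict (Ioi 0), P ρ := by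
  refine ⟨fun h => ?_, fun h => radialMeasure_absolutelyContinuous.ae_le h⟩
  rw [radialMeasure, ae_withDensity_iff ENNReal.measurable_ofReal] at h
  filter_upwards [h, ae_restrict_mem measurableSet_Ioi] with ρ hρ hρ_pos
  exact hρ (ENNReal.ofReal_pos.2 hρ_pos).ne'

theorem ae_radialMeasure_pos : ∀ᵐ ρ ∂radialMeasure, 0 < ρ :=
  ae_radialMeasure_iff.2 (ae_restrict_mem measurableSet_Ioi)

theorem lintegral_radialMeasure (g : ℝ → ℝ≥0∞) :
    ∫⁻ ρ, g ρ ∂radialMeasure = ∫⁻ ρ in Ioi 0, ENNReal.ofReal ρ * g ρ :=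
  lintegral_withDensity_eq_lintegral_mul_non_measurable _ ENNReal.measurable_ofReal
    (.of_forall fun _ => ENNReal.ofReal_lt_top) g

theorem lintegral_radialMeasure_ofReal_mul_rpow_le {F : ℝ → ℝ} {a b r s e x : ℝ} (ha : 0 ≤ a)
    (hb : 0 ≤ b) (hr : -2 < r + e) (hs : s + e < -2) (hx : 0 < x) (hF : ∀ y ∈ Ioi 0, 0 ≤ F y)
    (hF_low : ∀ y ∈ Ioc 0 x, F y ≤ a * y ^ r) (hF_high : ∀ y ∈ Ioi x, F y ≤ b * y ^ s) :
    ∫⁻ y, ENNReal.ofReal (F y) * ENNReal.ofReal (y ^ e) ∂radialMeasure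
      ≤ ENNReal.ofReal (a * (x ^ (r + e + 2) / (r + e + 2))
          + b * (-x ^ (s + e + 2) / (s + e + 2))) := by
  have hpow {y : ℝ} (hy : 0 < y) (c q : ℝ) : y * (c * y ^ q * y ^ e) = c * y ^ (q + e + 1) := by
    rw [rpow_add hy, rpow_add hy, rpow_one]
    ring
  calc ∫⁻ y, ENNReal.ofReal (F y) * ENNReal.ofReal (y ^ e) ∂radialMeasure
      = ∫⁻ y in Ioi 0, ENNReal.ofReal (y * (F y * y ^ e)) := by
        rw [lintegral_radialMeasure]
        refine setLIntegral_congr_fun measurableSet_Ioi fun y hy => ?_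
        rw [ENNReal.ofReal_mul (mem_Ioi.1 hy).le, ENNReal.ofReal_mul (hF y hy)]
    _ ≤ ENNReal.ofReal (a * (x ^ (r + e + 1 + 1) / (r + e + 1 + 1))
          + b * (-x ^ (s + e + 1 + 1) / (s + e + 1 + 1))) := by
        refine setLIntegral_Ioi_zero_ofReal_le_of_le_rpow ha hb (by linarith) (by linarith) hx
          (fun y hy => ?_) (fun y hy => ?_)
        · have hy_pos : 0 < y := hy.1
          rw [← hpow hy_pos]
          gcongr
          exact hF_low y hy
        · have hy_pos : 0 < y := hx.trans hy
          rw [← hpow hy_pos]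
          gcongr
          exact hF_high y hy
    _ = _ := by norm_num only [add_assoc]

theorem integral_radialMeasure {E : Type*} [NormedAddCommGroup E] [NormedSpace ℝ E] (f : ℝ → E) :
    ∫ ρ, f ρ ∂radialMeasure = ∫ ρ in Ioi 0, ρ • f ρ := by
  rw [radialMeasure, integral_withDensity_eq_integral_toReal_smul ENNReal.measurable_ofReal
    (.of_forall fun _ => ENNReal.ofReal_lt_top)]
  refine setIntegral_congr_fun measurableSet_Ioi fun ρ hρ => ?_
  simp only [ENNReal.toReal_ofReal (mem_Ioi.1 hρ).le]

theorem integrable_radialMeasure_iff {E : Type*} [NormedAddCommGroup E] [NormedSpace ℝ E]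
    {f : ℝ → E} :
    Integrable f radialMeasure ↔ IntegrableOn (fun ρ => ρ • f ρ) (Ioi 0) := by
  rw [radialMeasure, integrable_withDensity_iff_integrable_smul' ENNReal.measurable_ofReal
    (.of_forall fun _ => ENNReal.ofReal_lt_top)]
  refine integrableOn_congr_fun (fun ρ hρ => ?_) measurableSet_Ioi
  simp only [ENNReal.toReal_ofReal (mem_Ioi.1 hρ).le]

theorem toReal_eLpNorm_radialMeasure {E : Type*} [NormedAddCommGroup E] {p : ℝ} (hp : 0 < p)
    {f : ℝ → E} (hf : AEStronglyMeasurable f (volume.restrict (Ioi 0))) :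
    (eLpNorm f (ENNReal.ofReal p) radialMeasure).toReal
      = (∫ ρ in Ioi 0, ‖f ρ‖ ^ p * ρ) ^ (1 / p) := by
  have hf' := hf.mono_ac radialMeasure_absolutelyContinuous
  rw [toReal_eLpNorm hf', lpNorm_eq_integral_norm_rpow_toReal (ENNReal.ofReal_pos.2 hp).ne'
    ENNReal.ofReal_ne_top hf', integral_radialMeasure, ENNReal.toReal_ofReal hp.le, one_div]
  simp only [smul_eq_mul, mul_comm]

theorem memLp_radialMeasure {E : Type*} [NormedAddCommGroup E] {p : ℝ} (hp : 0 < p)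
    {f : ℝ → E} (hf : AEStronglyMeasurable f (volume.restrict (Ioi 0)))
    (hint : IntegrableOn (fun ρ => ‖f ρ‖ ^ p * ρ) (Ioi 0)) :
    MemLp f (ENNReal.ofReal p) radialMeasure := by
  rw [← integrable_norm_rpow_iff (hf.mono_ac radialMeasure_absolutelyContinuous)
    (ENNReal.ofReal_pos.2 hp).ne' ENNReal.ofReal_ne_top, integrable_radialMeasure_iff,
    ENNReal.toReal_ofReal hp.le]
  simpa only [smul_eq_mul, mul_comm] using hint

end RadialMeasure

section RadialKernel

/-- The positive kernel, homogeneous of degree `-2` in `(x, y)`, that dominates the inverse of `L₀`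
on the orthogonal complement of `h₁`. The exponents of its two branches are what makes it bounded
on every `L^p(ρ dρ)`, `1 ≤ p < ∞`. -/
def radialKernel (x y : ℝ) : ℝ := min (y / x ^ 3) (1 / y ^ 2)

theorem radialKernel_pos {x y : ℝ} (hx : 0 < x) (hy : 0 < y) : 0 < radialKernel x y :=
  lt_min (by positivity) (by positivity)

theorem radialKernel_of_le {x y : ℝ} (hy : 0 < y) (hyx : y ≤ x) :
    radialKernel x y = y / x ^ 3 := by
  have hx : 0 < x := hy.trans_le hyx
  refine min_eq_left ?_
  rw [div_le_div_iff₀ (by positivity) (by positivity), one_mul, ← pow_succ']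
  gcongr

theorem radialKernel_of_ge {x y : ℝ} (hx : 0 < x) (hxy : x ≤ y) :
    radialKernel x y = 1 / y ^ 2 := by
  have hy : 0 < y := hx.trans_le hxy
  refine min_eq_right ?_
  rw [div_le_div_iff₀ (by positivity) (by positivity), one_mul, ← pow_succ']
  gcongr

theorem measurable_radialKernel : Measurable (Function.uncurry radialKernel) :=
  (measurable_snd.div (measurable_fst.pow_const 3)).min
    (measurable_const.div (measurable_snd.pow_const 2))

theorem radialKernel_le_max_mul (x : ℝ) {x' y : ℝ} (hx : 0 < x) (hx' : 0 < x') (hy : 0 < y) :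
    radialKernel x y ≤ max 1 ((x' / x) ^ 3) * radialKernel x' y := by
  rw [radialKernel, radialKernel, mul_min_of_nonneg _ _ (by positivity)]
  refine min_le_min ?_ (le_mul_of_one_le_left (by positivity) (le_max_left _ _))
  calc y / x ^ 3 = (x' / x) ^ 3 * (y / x' ^ 3) := by field_simp
    _ ≤ max 1 ((x' / x) ^ 3) * (y / x' ^ 3) := by gcongr; exact le_max_right _ _

theorem lintegral_radialKernel_mul_rpow_le {b x : ℝ} (hb : 0 < b) (hb' : b < 3) (hx : 0 < x) :
    ∫⁻ y, ENNReal.ofReal (radialKernel x y) * ENNReal.ofReal (y ^ (-b)) ∂radialMeasure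
      ≤ ENNReal.ofReal (1 / (3 - b) + 1 / b) * ENNReal.ofReal (x ^ (-b)) := by
  have hlow : ∀ y ∈ Ioc 0 x, radialKernel x y ≤ x ^ (-3 : ℝ) * y ^ (1 : ℝ) := fun y _ =>
    (min_le_left _ _).trans_eq (by rw [rpow_neg hx.le, rpow_one]; norm_cast; ring)
  have hhigh : ∀ y ∈ Ioi x, radialKernel x y ≤ 1 * y ^ (-2 : ℝ) := fun y hy =>
    (min_le_right _ _).trans_eq (by rw [rpow_neg (hx.trans hy).le]; norm_cast)
  refine (lintegral_radialMeasure_ofReal_mul_rpow_le (by positivity) zero_le_one (by linarith)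
    (by linarith) hx (fun y hy => (radialKernel_pos hx hy).le) hlow hhigh).trans_eq ?_
  have hpow : x ^ (-3 : ℝ) * x ^ (3 - b) = x ^ (-b) := by
    rw [← rpow_add hx]
    ring_nf
  rw [← ENNReal.ofReal_mul' (by positivity), show 1 + -b + 2 = 3 - b by ring,
    show -2 + -b + 2 = -b by ring, ← mul_div_assoc, hpow, neg_div_neg_eq]
  ring_nf

theorem lintegral_rpow_mul_radialKernel_le {c y : ℝ} (hc : -1 < c) (hc' : c < 2) (hy : 0 < y) :
    ∫⁻ x, ENNReal.ofReal (radialKernel x y) * ENNReal.ofReal (x ^ (-c)) ∂radialMeasure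
      ≤ ENNReal.ofReal (1 / (2 - c) + 1 / (1 + c)) * ENNReal.ofReal (y ^ (-c)) := by
  have hlow : ∀ x ∈ Ioc 0 y, radialKernel x y ≤ y ^ (-2 : ℝ) * x ^ (0 : ℝ) := fun x _ =>
    (min_le_right _ _).trans_eq (by rw [rpow_neg hy.le, rpow_zero]; norm_cast; ring)
  have hhigh : ∀ x ∈ Ioi y, radialKernel x y ≤ y * x ^ (-3 : ℝ) := fun x hx =>
    (min_le_left _ _).trans_eq (by rw [rpow_neg (hy.trans hx).le]; norm_cast)
  refine (lintegral_radialMeasure_ofReal_mul_rpow_le (by positivity) hy.le (by linarith)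
    (by linarith) hy (fun x hx => (radialKernel_pos hx hy).le) hlow hhigh).trans_eq ?_
  have hpow_low : y ^ (-2 : ℝ) * y ^ (2 - c) = y ^ (-c) := by
    rw [← rpow_add hy]
    ring_nf
  have hpow_high : y * y ^ (-(1 + c)) = y ^ (-c) := by
    nth_rw 1 [← rpow_one y]
    rw [← rpow_add hy]
    ring_nf
  rw [← ENNReal.ofReal_mul' (by positivity), show 0 + -c + 2 = 2 - c by ring,
    show -3 + -c + 2 = -(1 + c) by ring, ← mul_div_assoc, hpow_low, neg_div_neg_eq,
    ← mul_div_assoc, hpow_high]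
  ring_nf

theorem exists_lintegral_radialKernel_rpow_le {p : ℝ} (hp : 1 ≤ p) :
    ∃ K : ℝ≥0∞, K ≠ ∞ ∧ ∀ g : ℝ → ℝ≥0∞, AEMeasurable g radialMeasure →
      ∫⁻ x, (∫⁻ y, ENNReal.ofReal (radialKernel x y) * g y ∂radialMeasure) ^ p ∂radialMeasure
        ≤ K * ∫⁻ y, g y ^ p ∂radialMeasure := by
  have hp_pos : 0 < p := by linarith
  have hinv_pos : 0 < 1 / p := by positivity
  have hinv_le : 1 / p ≤ 1 := by rwa [div_le_one hp_pos]
  set w : ℝ → ℝ≥0∞ := fun x => ENNReal.ofReal (x ^ (-(1 / p)))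
  have hw : AEMeasurable w radialMeasure := Measurable.aemeasurable (by fun_prop)
  have hw_zero : ∀ᵐ x ∂radialMeasure, w x ≠ 0 := ae_radialMeasure_pos.mono fun x hx =>
    (ENNReal.ofReal_pos.2 (rpow_pos_of_pos hx _)).ne'
  have hw_pow {x : ℝ} (hx : 0 < x) : w x ^ (p - 1) = ENNReal.ofReal (x ^ (-(1 - 1 / p))) := by
    rw [ENNReal.ofReal_rpow_of_nonneg (by positivity) (by linarith), ← rpow_mul hx.le]
    congr 2
    field_simp
  refine ⟨ENNReal.ofReal (1 / (3 - 1 / p) + 1 / (1 / p)) ^ (p - 1)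
    * ENNReal.ofReal (1 / (2 - (1 - 1 / p)) + 1 / (1 + (1 - 1 / p))),
    ENNReal.mul_ne_top (ENNReal.rpow_ne_top_of_nonneg (by linarith) ENNReal.ofReal_ne_top)
      ENNReal.ofReal_ne_top, fun g hg => ?_⟩
  refine lintegral_rpow_lintegral_mul_le_of_schur hp measurable_radialKernel.ennreal_ofReal hw hw
    hg hw_zero (.of_forall fun _ => ENNReal.ofReal_ne_top) ?_ ?_
  · filter_upwards [ae_radialMeasure_pos] with x hx
    exact lintegral_radialKernel_mul_rpow_le hinv_pos (by linarith) hx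
  · filter_upwards [ae_radialMeasure_pos] with y hy
    rw [hw_pow hy, lintegral_congr_ae (ae_radialMeasure_pos.mono fun x hx => by rw [hw_pow hx])]
    exact lintegral_rpow_mul_radialKernel_le (by linarith) (by linarith) hy

theorem exists_eLpNorm_lintegral_radialKernel_le {p : ℝ} (hp : 1 ≤ p) :
    ∃ K : NNReal, ∀ g : ℝ → ℝ≥0∞, AEMeasurable g radialMeasure →
      eLpNorm (fun x => ∫⁻ y, ENNReal.ofReal (radialKernel x y) * g y ∂radialMeasure)
          (ENNReal.ofReal p) radialMeasure
        ≤ K * eLpNorm g (ENNReal.ofReal p) radialMeasure := by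
  have hp_pos : 0 < p := by linarith
  obtain ⟨K, hK_top, hK⟩ := exists_lintegral_radialKernel_rpow_le hp
  lift K to NNReal using hK_top
  refine ⟨K ^ (1 / p), fun g hg => ?_⟩
  have hp_ne := (ENNReal.ofReal_pos.2 hp_pos).ne'
  rw [eLpNorm_eq_lintegral_rpow_enorm_toReal hp_ne ENNReal.ofReal_ne_top,
    eLpNorm_eq_lintegral_rpow_enorm_toReal hp_ne ENNReal.ofReal_ne_top,
    ENNReal.toReal_ofReal hp_pos.le, ENNReal.coe_rpow_of_nonneg _ (by positivity),
    ← ENNReal.mul_rpow_of_nonneg _ _ (by positivity)]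
  exact ENNReal.rpow_le_rpow (hK g hg) (by positivity)

theorem lintegral_radialKernel_mul_lt_top {p : ℝ} (hp : 1 ≤ p) {g : ℝ → ℝ≥0∞}
    (hg : AEMeasurable g radialMeasure) (hg_top : eLpNorm g (ENNReal.ofReal p) radialMeasure ≠ ∞)
    {x : ℝ} (hx : 0 < x) :
    ∫⁻ y, ENNReal.ofReal (radialKernel x y) * g y ∂radialMeasure < ∞ := by
  have hp_pos : 0 < p := by linarith
  obtain ⟨K, hK⟩ := exists_eLpNorm_lintegral_radialKernel_le hp
  have hmeas : AEMeasurable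
      (fun x => ∫⁻ y, ENNReal.ofReal (radialKernel x y) * g y ∂radialMeasure) radialMeasure :=
    (measurable_radialKernel.ennreal_ofReal.aemeasurable.mul hg.comp_snd).lintegral_prod_right'
  have hfinite := lintegral_rpow_enorm_lt_top_of_eLpNorm_lt_top (ENNReal.ofReal_pos.2 hp_pos).ne'
    ENNReal.ofReal_ne_top ((hK g hg).trans_lt (ENNReal.mul_lt_top ENNReal.coe_lt_top hg_top.lt_top))
  simp only [enorm_eq_self, ENNReal.toReal_ofReal hp_pos.le] at hfinite
  have hne : (ae (volume.restrict (Ioi (0 : ℝ)))).NeBot := ae_restrict_neBot.2 (by simp)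
  obtain ⟨x', hx'_top, hx'⟩ := ((ae_radialMeasure_iff.1
    (ae_lt_top' (hmeas.pow_const p) hfinite.ne)).and (ae_restrict_mem measurableSet_Ioi)).exists
  rw [ENNReal.rpow_lt_top_iff_of_pos hp_pos] at hx'_top
  refine lt_of_le_of_lt ?_ (ENNReal.mul_lt_top
    (ENNReal.ofReal_lt_top (r := max 1 ((x' / x) ^ 3))) hx'_top)
  rw [← lintegral_const_mul' _ _ ENNReal.ofReal_ne_top]
  refine lintegral_mono_ae (ae_radialMeasure_pos.mono fun y hy => ?_)
  rw [← mul_assoc, ← ENNReal.ofReal_mul (by positivity)]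
  gcongr
  exact radialKernel_le_max_mul x hx hx' hy

end RadialKernel

section ProductRule

theorem continuousOn_of_eq_add_integral {E : Type*} [NormedAddCommGroup E] [NormedSpace ℝ E]
    {z f : ℝ → E} {a b : ℝ} (hf : IntervalIntegrable f volume a b)
    (hz : ∀ x ∈ uIcc a b, z x = z a + ∫ t in a..x, f t) : ContinuousOn z (uIcc a b) :=
  (continuousOn_const.add
    (intervalIntegral.continuousOn_primitive_interval' hf left_mem_uIcc)).congr hz

theorem integral_mul_add_mul_eq_sub_of_eq_add_integral {v v' y f : ℝ → ℝ} {a b : ℝ}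
    (hv' : IntervalIntegrable v' volume a b)
    (hv : ∀ x ∈ uIcc a b, v x = v a + ∫ t in a..x, v' t)
    (hf : IntervalIntegrable f volume a b)
    (hy : ∀ x ∈ uIcc a b, y x = y a + ∫ t in a..x, f t) :
    ∫ x in a..b, (v' x * y x + v x * f x) = v b * y b - v a * y a := by
  have hac (c : ℝ) {g : ℝ → ℝ} (hg : IntervalIntegrable g volume a b) :
      AbsolutelyContinuousOnInterval (fun x => c + ∫ t in a..x, g t) a b :=
    (contDiffOn_const (c := c)).absolutelyContinuousOnInterval.fun_add
      (hg.absolutelyContinuousOnInterval_intervalIntegral left_mem_uIcc)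
  have hparts := (hac (v a) hv').integral_deriv_mul_eq_sub (hac (y a) hf)
  rw [← hv b right_mem_uIcc, ← hy b right_mem_uIcc, ← hv a left_mem_uIcc,
    ← hy a left_mem_uIcc] at hparts
  rw [← hparts]
  refine intervalIntegral.integral_congr_ae ?_
  filter_upwards [hv'.ae_hasDerivAt_integral, hf.ae_hasDerivAt_integral] with x hvx hfx hx
  have hx' : x ∈ uIcc a b := uIoc_subset_uIcc hx
  rw [((hvx hx' a left_mem_uIcc).const_add (v a)).deriv,
    ((hfx hx' a left_mem_uIcc).const_add (y a)).deriv, ← hv x hx', ← hy x hx']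

theorem integral_smul_add_smul_eq_sub_of_eq_add_integral {E : Type*} [NormedAddCommGroup E]
    [NormedSpace ℝ E] [CompleteSpace E] {v v' : ℝ → ℝ} {z f : ℝ → E} {a b : ℝ}
    (hv' : IntervalIntegrable v' volume a b)
    (hv : ∀ x ∈ uIcc a b, v x = v a + ∫ t in a..x, v' t)
    (hf : IntervalIntegrable f volume a b)
    (hz : ∀ x ∈ uIcc a b, z x = z a + ∫ t in a..x, f t) :
    ∫ x in a..b, (v' x • z x + v x • f x) = v b • z b - v a • z a := by
  have hint : IntervalIntegrable (fun x => v' x • z x + v x • f x) volume a b :=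
    (hv'.smul_continuousOn (continuousOn_of_eq_add_integral hf hz)).add
      (hf.continuousOn_smul (continuousOn_of_eq_add_integral hv' hv))
  refine (SeparatingDual.eq_iff_forall_dual_eq (R := ℝ)).2 fun L => ?_
  have hLf : IntervalIntegrable (fun x => L (f x)) volume a b :=
    ⟨L.integrable_comp hf.1, L.integrable_comp hf.2⟩
  have hLz : ∀ x ∈ uIcc a b, L (z x) = L (z a) + ∫ t in a..x, L (f t) := fun x hx => by
    rw [L.intervalIntegral_comp_comm (hf.mono_set (uIcc_subset_uIcc_left hx)), ← map_add,
      ← hz x hx]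
  rw [← L.intervalIntegral_comp_comm hint]
  simpa only [map_add, map_sub, map_smul, smul_eq_mul] using
    integral_mul_add_mul_eq_sub_of_eq_add_integral hv' hv hLf hLz

end ProductRule

namespace LocACC

variable {z dz : ℝ → ℂ}

theorem continuousOn (h : LocACC z dz) : ContinuousOn z (Ioi 0) := by
  intro x hx
  have hx_pos : 0 < x := hx
  have hle : x / 2 ≤ x + 1 := by linarith
  have hcont : ContinuousOn z (uIcc (x / 2) (x + 1)) := by
    refine continuousOn_of_eq_add_integral (h.1 _ _ (by positivity) hle) fun t ht => ?_
    rw [uIcc_of_le hle] at ht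
    rw [← h.2 _ _ (by positivity) ht.1, add_sub_cancel]
  rw [uIcc_of_le hle] at hcont
  exact (hcont.continuousAt (Icc_mem_nhds (by linarith) (by linarith))).continuousWithinAt

theorem locallyIntegrableOn (h : LocACC z dz) : LocallyIntegrableOn dz (Ioi 0) := by
  intro x hx
  have hx_pos : 0 < x := hx
  refine ⟨Icc (x / 2) (x + 1),
    mem_nhdsWithin_of_mem_nhds (Icc_mem_nhds (by linarith) (by linarith)), ?_⟩
  rw [← intervalIntegrable_iff_integrableOn_Icc_of_le (by linarith)]
  exact h.1 _ _ (by positivity) (by linarith)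

theorem smul_sub_smul_eq_integral (h : LocACC z dz) {v v' : ℝ → ℝ} {a b : ℝ} (ha : 0 < a)
    (hab : a ≤ b) (hv : ∀ x ∈ Icc a b, HasDerivAt v (v' x) x) (hv' : ContinuousOn v' (Icc a b)) :
    v b • z b - v a • z a = ∫ x in a..b, (v' x • z x + v x • dz x) := by
  rw [← uIcc_of_le hab] at hv hv'
  refine (integral_smul_add_smul_eq_sub_of_eq_add_integral hv'.intervalIntegrable
    (fun x hx => ?_) (h.1 a b ha hab) fun x hx => ?_).symm
  · have hsub : uIcc a x ⊆ uIcc a b := uIcc_subset_uIcc_left hx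
    rw [intervalIntegral.integral_eq_sub_of_hasDerivAt (fun t ht => hv t (hsub ht))
      (hv'.mono hsub).intervalIntegrable, add_sub_cancel]
  · rw [uIcc_of_le hab] at hx
    rw [← h.2 a x ha hx.1, add_sub_cancel]

end LocACC

section Profile

variable (m : ℕ) {r : ℝ}

theorem inv_h1f (r : ℝ) : (h1f m r)⁻¹ = (r ^ (m : ℤ) + r ^ (-(m : ℤ))) / 2 := by
  rw [h1f, inv_div]

theorem h1f_pos (hr : 0 < r) : 0 < h1f m r := by
  unfold h1f
  positivity

theorem zpow_le_two_mul_inv_h1f {n : ℤ} (hn : |n| ≤ m) (hr : 0 < r) :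
    r ^ n ≤ 2 * (h1f m r)⁻¹ := by
  have hpos (k : ℤ) : 0 ≤ r ^ k := (zpow_pos hr k).le
  rw [inv_h1f, mul_div_cancel₀ _ two_ne_zero]
  rcases le_total 1 r with h | h
  · exact (zpow_le_zpow_right₀ h (le_of_abs_le hn)).trans (le_add_of_nonneg_right (hpos _))
  · exact (zpow_le_zpow_right_of_le_one₀ hr h (neg_le_of_abs_le hn)).trans
      (le_add_of_nonneg_left (hpos _))

theorem h1f_le_two_mul_zpow {n : ℤ} (hn : |n| ≤ m) (hr : 0 < r) : h1f m r ≤ 2 * r ^ n := by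
  have h := zpow_le_two_mul_inv_h1f m (abs_neg n ▸ hn) hr
  rw [zpow_neg, ← div_eq_mul_inv, le_div_iff₀ (h1f_pos m hr), inv_mul_eq_div,
    div_le_iff₀ (zpow_pos hr n)] at h
  exact h

theorem abs_h3f_le_one (hr : 0 < r) : |h3f m r| ≤ 1 := by
  have hpos (k : ℤ) : 0 < r ^ k := zpow_pos hr k
  have hsum := add_pos (hpos m) (hpos (-m))
  rw [h3f, abs_div, abs_of_pos hsum, div_le_one hsum, abs_le]
  constructor <;> linarith [hpos m, hpos (-m)]

theorem hasDerivAt_inv_h1f (hr : 0 < r) :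
    HasDerivAt (fun r => (h1f m r)⁻¹) (m / r * h3f m r * (h1f m r)⁻¹) r := by
  have hsum : r ^ (m : ℤ) + r ^ (-(m : ℤ)) ≠ 0 := by positivity
  simp only [inv_h1f]
  refine (((hasDerivAt_zpow m r (Or.inl hr.ne')).add
    (hasDerivAt_zpow (-m) r (Or.inl hr.ne'))).div_const 2).congr_deriv ?_
  rw [h3f, zpow_sub_one₀ hr.ne', zpow_sub_one₀ hr.ne']
  push_cast
  field_simp
  ring

theorem continuousOn_inv_h1f : ContinuousOn (fun r => (h1f m r)⁻¹) (Ioi 0) := fun _ hr =>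
  (hasDerivAt_inv_h1f m hr).continuousAt.continuousWithinAt

theorem continuousOn_h1f : ContinuousOn (h1f m) (Ioi 0) :=
  ((continuousOn_inv_h1f m).inv₀ fun _ hr => inv_ne_zero (h1f_pos m hr).ne').congr
    fun _ _ => (inv_inv _).symm

theorem continuousOn_h3f : ContinuousOn (h3f m) (Ioi 0) := by
  have hzpow (n : ℤ) : ContinuousOn (fun r : ℝ => r ^ n) (Ioi 0) :=
    continuousOn_id.zpow₀ n fun r hr => Or.inl (mem_Ioi.1 hr).ne'
  refine ((hzpow m).sub (hzpow (-m))).div ((hzpow m).add (hzpow (-m))) fun r hr => ?_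
  have hr_pos : 0 < r := hr
  positivity

end Profile

section ProfileMass

variable {m : ℕ}

theorem h1f_sq_mul_le_rpow (m : ℕ) {n k : ℤ} (hn : |n| ≤ m) (hk : |k| ≤ m) {s : ℝ} (hs : 0 < s) :
    h1f m s ^ 2 * s ≤ 4 * s ^ ((n + k + 1 : ℤ) : ℝ) := by
  have hbound_n := h1f_le_two_mul_zpow m hn hs
  have hbound_k := h1f_le_two_mul_zpow m hk hs
  have hnonneg := (h1f_pos m hs).le
  calc h1f m s ^ 2 * s = h1f m s * h1f m s * s := by ring
    _ ≤ 2 * s ^ n * (2 * s ^ k) * s := by gcongr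
    _ = 4 * s ^ ((n + k + 1 : ℤ) : ℝ) := by
        rw [rpow_intCast, zpow_add_one₀ hs.ne', zpow_add₀ hs.ne']
        ring

theorem ae_h1f_sq_mul_nonneg (m : ℕ) : 0 ≤ᵐ[volume.restrict (Ioi 0)] fun s => h1f m s ^ 2 * s :=
  (ae_restrict_mem measurableSet_Ioi).mono fun _ hs => mul_nonneg (sq_nonneg _) (mem_Ioi.1 hs).le

theorem integrableOn_h1f_sq_mul (hm : 2 ≤ m) :
    IntegrableOn (fun s => h1f m s ^ 2 * s) (Ioi 0) := by
  have hmeas : AEStronglyMeasurable (fun s => h1f m s ^ 2 * s) (volume.restrict (Ioi 0)) :=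
    (((continuousOn_h1f m).pow 2).mul continuousOn_id).aestronglyMeasurable measurableSet_Ioi
  have hlow : ∀ s ∈ Ioc (0 : ℝ) 1, h1f m s ^ 2 * s ≤ 4 * s ^ ((0 + 0 + 1 : ℤ) : ℝ) :=
    fun s hs => h1f_sq_mul_le_rpow m (by simp) (by simp) hs.1
  have hhigh : ∀ s ∈ Ioi (1 : ℝ), h1f m s ^ 2 * s ≤ 4 * s ^ ((-2 + -2 + 1 : ℤ) : ℝ) :=
    fun s hs => h1f_sq_mul_le_rpow m (by simpa using hm) (by simpa using hm) (one_pos.trans hs)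
  exact ⟨hmeas, (hasFiniteIntegral_iff_ofReal (ae_h1f_sq_mul_nonneg m)).2
    ((setLIntegral_Ioi_zero_ofReal_le_of_le_rpow zero_le_four zero_le_four (by norm_num)
      (by norm_num) one_pos hlow hhigh).trans_lt ENNReal.ofReal_lt_top)⟩

/-- The squared norm of `h₁` in `L²(ρ dρ)`. -/
def h1Mass (m : ℕ) : ℝ := ∫ s in Ioi 0, h1f m s ^ 2 * s

theorem h1Mass_pos (hm : 2 ≤ m) : 0 < h1Mass m := by
  refine (setIntegral_pos_iff_support_of_nonneg_ae (ae_h1f_sq_mul_nonneg m)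
    (integrableOn_h1f_sq_mul hm)).2 ?_
  have hsupp : Ioi 0 ⊆ Function.support fun s => h1f m s ^ 2 * s := fun s hs =>
    (mul_pos (pow_pos (h1f_pos m hs) 2) hs).ne'
  rw [inter_eq_right.2 hsupp, Real.volume_Ioi]
  exact ENNReal.zero_lt_top

theorem setLIntegral_h1f_sq_mul_le_h1Mass (hm : 2 ≤ m) {S : Set ℝ} (hS : S ⊆ Ioi 0) :
    ∫⁻ s in S, ENNReal.ofReal (h1f m s ^ 2 * s) ≤ ENNReal.ofReal (h1Mass m) := by
  rw [h1Mass, ofReal_integral_eq_lintegral_ofReal (integrableOn_h1f_sq_mul hm)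
    (ae_h1f_sq_mul_nonneg m)]
  exact lintegral_mono_set hS

theorem setLIntegral_Ioc_h1f_sq_mul_le (hm : 2 ≤ m) {t : ℝ} (ht : 0 < t) :
    ∫⁻ s in Ioc 0 t, ENNReal.ofReal (h1f m s ^ 2 * s) ≤ ENNReal.ofReal (t ^ (m + 2)) := by
  have hm' : (2 : ℝ) ≤ m := by exact_mod_cast hm
  have hlow : ∀ s ∈ Ioc 0 t, h1f m s ^ 2 * s ≤ 4 * s ^ ((0 + m + 1 : ℤ) : ℝ) :=
    fun s hs => h1f_sq_mul_le_rpow m (by simp) (by simp) hs.1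
  refine (setLIntegral_Ioc_ofReal_le_of_le_rpow zero_le_four (by push_cast; linarith) ht.le
    hlow).trans (ENNReal.ofReal_le_ofReal ?_)
  have hexp : ((0 + m + 1 : ℤ) : ℝ) + 1 = (m + 2 : ℕ) := by push_cast; ring
  rw [hexp, rpow_natCast, ← mul_div_assoc, div_le_iff₀ (by positivity), mul_comm]
  gcongr
  push_cast
  linarith

theorem setLIntegral_Ici_h1f_sq_mul_le (hm : 3 ≤ m) {t : ℝ} (ht : 0 < t) :
    ∫⁻ s in Ici t, ENNReal.ofReal (h1f m s ^ 2 * s) ≤ ENNReal.ofReal ((t ^ (m + 1))⁻¹) := by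
  have hm' : (3 : ℝ) ≤ m := by exact_mod_cast hm
  rw [← setLIntegral_congr Ioi_ae_eq_Ici]
  have hhigh : ∀ s ∈ Ioi t, h1f m s ^ 2 * s ≤ 4 * s ^ ((-3 + -m + 1 : ℤ) : ℝ) :=
    fun s hs => h1f_sq_mul_le_rpow m (by simpa using hm) (by simp) (ht.trans hs)
  refine (setLIntegral_Ioi_ofReal_le_of_le_rpow zero_le_four (by push_cast; linarith) ht
    hhigh).trans (ENNReal.ofReal_le_ofReal ?_)
  have hexp : ((-3 + -m + 1 : ℤ) : ℝ) + 1 = -((m + 1 : ℕ) : ℝ) := by push_cast; ring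
  rw [hexp, neg_div_neg_eq, rpow_neg ht.le, rpow_natCast, ← mul_div_assoc,
    div_le_iff₀ (by positivity), mul_comm]
  gcongr
  push_cast
  linarith

theorem integral_h1f_sq_smul_sub (hm : 2 ≤ m) {z : ℝ → ℂ}
    (hint : IntegrableOn (fun s => z s * ((h1f m s * s : ℝ) : ℂ)) (Ioi 0))
    (horth : ∫ s in Ioi (0 : ℝ), z s * ((h1f m s * s : ℝ) : ℂ) = 0) (c : ℂ) :
    ∫ s in Ioi (0 : ℝ), (h1f m s ^ 2 * s) • (c - (h1f m s)⁻¹ • z s) = h1Mass m • c := by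
  have hsplit : ∀ s ∈ Ioi (0 : ℝ), (h1f m s ^ 2 * s) • (c - (h1f m s)⁻¹ • z s)
      = (h1f m s ^ 2 * s) • c - z s * ((h1f m s * s : ℝ) : ℂ) := fun s hs => by
    have hne := (h1f_pos m hs).ne'
    rw [smul_sub, smul_smul, Complex.real_smul (z := z s), mul_comm (z s)]
    congr 3
    field_simp
  rw [setIntegral_congr_fun measurableSet_Ioi hsplit,
    integral_sub ((integrableOn_h1f_sq_mul hm).smul_const c) hint, horth, sub_zero,
    integral_smul_const, h1Mass]

end ProfileMass

section KernelBound

variable {m : ℕ} {ρ t : ℝ}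

theorem pow_le_two_mul_inv_h1f (hm : 2 ≤ m) (ht : 0 ≤ t) (hρ : 0 < ρ) (htρ : t ≤ ρ) :
    t ^ m ≤ 2 * (h1f m ρ)⁻¹ * (t / ρ) ^ 2 := by
  have hpow : ρ ^ m ≤ 2 * (h1f m ρ)⁻¹ := by
    simpa only [zpow_natCast] using zpow_le_two_mul_inv_h1f m (n := m) (by simp) hρ
  calc t ^ m = ρ ^ m * (t / ρ) ^ m := by rw [div_pow, mul_div_cancel₀ _ (by positivity)]
    _ ≤ 2 * (h1f m ρ)⁻¹ * (t / ρ) ^ 2 := by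
        have hv : 0 < (h1f m ρ)⁻¹ := inv_pos.2 (h1f_pos m hρ)
        gcongr ?_ * ?_
        exact pow_le_pow_of_le_one (by positivity) ((div_le_one hρ).2 htρ) hm

theorem sq_le_two_mul_inv_h1f (hm : 2 ≤ m) (hρ : 0 < ρ) :
    t ^ 2 ≤ 2 * (h1f m ρ)⁻¹ * (t / ρ) ^ 2 := by
  have hpow : ρ ^ 2 ≤ 2 * (h1f m ρ)⁻¹ :=
    zpow_le_two_mul_inv_h1f m (n := 2) (by simpa using hm) hρ
  calc t ^ 2 = ρ ^ 2 * (t / ρ) ^ 2 := by field_simp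
    _ ≤ 2 * (h1f m ρ)⁻¹ * (t / ρ) ^ 2 := by gcongr

theorem inv_pow_le_two_mul_inv_h1f (hm : 1 ≤ m) (hρ : 0 < ρ) (hρt : ρ ≤ t) :
    (t ^ m)⁻¹ ≤ 2 * (h1f m ρ)⁻¹ * (ρ / t) := by
  have ht : 0 < t := hρ.trans_le hρt
  have hpow : (ρ ^ m)⁻¹ ≤ 2 * (h1f m ρ)⁻¹ := by
    simpa only [zpow_neg, zpow_natCast] using zpow_le_two_mul_inv_h1f m (n := -m) (by simp) hρ
  calc (t ^ m)⁻¹ = (ρ ^ m)⁻¹ * (ρ / t) ^ m := by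
        rw [div_pow]
        field_simp
    _ ≤ 2 * (h1f m ρ)⁻¹ * (ρ / t) := by
        have hv : 0 < (h1f m ρ)⁻¹ := inv_pos.2 (h1f_pos m hρ)
        gcongr ?_ * ?_
        exact pow_le_of_le_one (by positivity) ((div_le_one ht).2 hρt)
          (Nat.one_le_iff_ne_zero.1 hm)

theorem inv_le_two_mul_inv_h1f (hm : 1 ≤ m) (hρ : 0 < ρ) (ht : 0 ≤ t) :
    t⁻¹ ≤ 2 * (h1f m ρ)⁻¹ * (ρ / t) := by
  have hpow : ρ⁻¹ ≤ 2 * (h1f m ρ)⁻¹ := by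
    simpa only [zpow_neg_one] using
      zpow_le_two_mul_inv_h1f m (n := -1) (by simpa using hm) hρ
  calc t⁻¹ = ρ⁻¹ * (ρ / t) := by field_simp
    _ ≤ 2 * (h1f m ρ)⁻¹ * (ρ / t) := by gcongr

theorem inv_h1f_mul_min_le_low (hm : 2 ≤ m) (ht : 0 < t) (htρ : t ≤ ρ) {M : ℝ} (hM : 0 ≤ M) :
    (h1f m t)⁻¹ * min M (t ^ (m + 2)) ≤ (M + 1) * (h1f m ρ)⁻¹ * (t / ρ) ^ 2 := by
  have hρ : 0 < ρ := ht.trans_le htρ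
  set W := min M (t ^ (m + 2))
  calc (h1f m t)⁻¹ * W = (t ^ m * W + (t ^ m)⁻¹ * W) / 2 := by
        rw [inv_h1f, zpow_neg, zpow_natCast]
        ring
    _ ≤ (t ^ m * M + (t ^ m)⁻¹ * t ^ (m + 2)) / 2 := by
        gcongr
        exacts [min_le_left _ _, min_le_right _ _]
    _ = (M * t ^ m + t ^ 2) / 2 := by
        rw [pow_add]
        field_simp
    _ ≤ (M * (2 * (h1f m ρ)⁻¹ * (t / ρ) ^ 2) + 2 * (h1f m ρ)⁻¹ * (t / ρ) ^ 2) / 2 := by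
        gcongr
        exacts [pow_le_two_mul_inv_h1f hm ht.le hρ htρ, sq_le_two_mul_inv_h1f hm hρ]
    _ = (M + 1) * (h1f m ρ)⁻¹ * (t / ρ) ^ 2 := by ring

theorem inv_h1f_mul_min_le_high (hm : 1 ≤ m) (hρ : 0 < ρ) (hρt : ρ ≤ t) {M : ℝ} (hM : 0 ≤ M) :
    (h1f m t)⁻¹ * min M (t ^ (m + 1))⁻¹ ≤ (M + 1) * (h1f m ρ)⁻¹ * (ρ / t) := by
  have ht : 0 < t := hρ.trans_le hρt
  set W := min M (t ^ (m + 1))⁻¹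
  calc (h1f m t)⁻¹ * W = (t ^ m * W + (t ^ m)⁻¹ * W) / 2 := by
        rw [inv_h1f, zpow_neg, zpow_natCast]
        ring
    _ ≤ (t ^ m * (t ^ (m + 1))⁻¹ + (t ^ m)⁻¹ * M) / 2 := by
        gcongr
        exacts [min_le_right _ _, min_le_left _ _]
    _ = (M * (t ^ m)⁻¹ + t⁻¹) / 2 := by
        rw [pow_succ]
        field_simp
        ring
    _ ≤ (M * (2 * (h1f m ρ)⁻¹ * (ρ / t)) + 2 * (h1f m ρ)⁻¹ * (ρ / t)) / 2 := by
        gcongr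
        exacts [inv_pow_le_two_mul_inv_h1f hm hρ hρt, inv_le_two_mul_inv_h1f hm hρ ht.le]
    _ = (M + 1) * (h1f m ρ)⁻¹ * (ρ / t) := by ring

theorem measurableSet_mem_uIoc (ρ : ℝ) : MeasurableSet {q : ℝ × ℝ | q.2 ∈ uIoc ρ q.1} :=
  (measurableSet_lt (measurable_const.min measurable_fst) measurable_snd).inter
    (measurableSet_le measurable_snd (measurable_const.max measurable_fst))

theorem ofReal_inv_h1f_mul_setLIntegral_le_radialKernel (hm : 3 ≤ m) (hρ : 0 < ρ) (ht : 0 < t) :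
    ENNReal.ofReal (h1f m t)⁻¹ *
        ∫⁻ s in {s | t ∈ uIoc ρ s} ∩ Ioi 0, ENNReal.ofReal (h1f m s ^ 2 * s)
      ≤ ENNReal.ofReal ((h1Mass m + 1) * (h1f m ρ)⁻¹ * (ρ * (t * radialKernel ρ t))) := by
  have hm_two : 2 ≤ m := by lia
  have hmass := (h1Mass_pos hm_two).le
  have hinv : 0 ≤ (h1f m t)⁻¹ := inv_nonneg.2 (h1f_pos m ht).le
  set S : Set ℝ := {s | t ∈ uIoc ρ s} ∩ Ioi 0
  have htotal := setLIntegral_h1f_sq_mul_le_h1Mass hm_two (S := S) inter_subset_right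
  rcases le_or_gt t ρ with htρ | hρt
  · have hsub : S ⊆ Ioc 0 t := fun s ⟨hs, hs_pos⟩ => by
      rcases mem_uIoc.1 hs with h | h
      exacts [absurd h.1 htρ.not_gt, ⟨hs_pos, h.1.le⟩]
    have hS := (lintegral_mono_set hsub).trans (setLIntegral_Ioc_h1f_sq_mul_le hm_two ht)
    grw [le_min htotal hS, ← ENNReal.ofReal_min, ← ENNReal.ofReal_mul hinv,
      inv_h1f_mul_min_le_low hm_two ht htρ hmass, radialKernel_of_le ht htρ]
    refine (congrArg ENNReal.ofReal ?_).le
    field_simp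
  · have hsub : S ⊆ Ici t := fun s ⟨hs, _⟩ => by
      rcases mem_uIoc.1 hs with h | h
      exacts [h.2, absurd h.2 hρt.not_ge]
    have hS := (lintegral_mono_set hsub).trans (setLIntegral_Ici_h1f_sq_mul_le hm ht)
    grw [le_min htotal hS, ← ENNReal.ofReal_min, ← ENNReal.ofReal_mul hinv,
      inv_h1f_mul_min_le_high (one_le_two.trans hm_two) hρ hρt.le hmass,
      radialKernel_of_ge hρ hρt.le]
    refine (congrArg ENNReal.ofReal ?_).le
    field_simp

end KernelBound

namespace LocACC

variable {z dz : ℝ → ℂ} {m : ℕ}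

theorem aestronglyMeasurable_deriv (h : LocACC z dz) :
    AEStronglyMeasurable dz (volume.restrict (Ioi 0)) :=
  h.locallyIntegrableOn.aestronglyMeasurable

theorem aestronglyMeasurable_L0op (h : LocACC z dz) (m : ℕ) :
    AEStronglyMeasurable (L0op m z dz) (volume.restrict (Ioi 0)) := by
  have hcoef : ContinuousOn (fun ρ : ℝ => (m : ℝ) / ρ * h3f m ρ) (Ioi 0) :=
    (continuousOn_const.div continuousOn_id fun _ hρ => (mem_Ioi.1 hρ).ne').mul
      (continuousOn_h3f m)
  exact h.aestronglyMeasurable_deriv.add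
    (((Complex.continuous_ofReal.comp_continuousOn hcoef).mul h.continuousOn).aestronglyMeasurable
      measurableSet_Ioi)

theorem inv_h1f_smul_sub_eq_integral (h : LocACC z dz) (m : ℕ) {a b : ℝ} (ha : 0 < a)
    (hab : a ≤ b) :
    (h1f m b)⁻¹ • z b - (h1f m a)⁻¹ • z a = ∫ t in a..b, (h1f m t)⁻¹ • L0op m z dz t := by
  have hsub : Icc a b ⊆ Ioi 0 := fun _ ht => ha.trans_le ht.1
  have hcont : ContinuousOn (fun r => m / r * h3f m r * (h1f m r)⁻¹) (Icc a b) :=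
    (((continuousOn_const.div continuousOn_id fun _ hr => (mem_Ioi.1 hr).ne').mul
      (continuousOn_h3f m)).mul (continuousOn_inv_h1f m)).mono hsub
  rw [h.smul_sub_smul_eq_integral ha hab (fun r hr => hasDerivAt_inv_h1f m (hsub hr)) hcont]
  congr 1 with t
  simp only [L0op, Complex.real_smul]
  push_cast
  ring

theorem enorm_inv_h1f_smul_sub_le (h : LocACC z dz) (m : ℕ) {ρ s : ℝ} (hρ : 0 < ρ) (hs : 0 < s) :
    ‖(h1f m ρ)⁻¹ • z ρ - (h1f m s)⁻¹ • z s‖ₑ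
      ≤ ∫⁻ t in uIoc ρ s, ENNReal.ofReal (h1f m t)⁻¹ * ‖L0op m z dz t‖ₑ := by
  wlog hle : ρ ≤ s generalizing ρ s
  · rw [enorm_sub_rev, uIoc_comm]
    exact this hs hρ (le_of_not_ge hle)
  rw [enorm_sub_rev, h.inv_h1f_smul_sub_eq_integral m hρ hle,
    intervalIntegral.integral_of_le hle, uIoc_of_le hle]
  refine (enorm_integral_le_lintegral_enorm _).trans_eq ?_
  refine setLIntegral_congr_fun measurableSet_Ioc fun t ht => ?_
  rw [enorm_smul, Real.enorm_of_nonneg (inv_pos.2 (h1f_pos m (hρ.trans ht.1))).le]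

theorem ofReal_h1Mass_mul_enorm_le (h : LocACC z dz) (hm : 2 ≤ m)
    (hint : IntegrableOn (fun s => z s * ((h1f m s * s : ℝ) : ℂ)) (Ioi 0))
    (horth : ∫ s in Ioi (0 : ℝ), z s * ((h1f m s * s : ℝ) : ℂ) = 0) {ρ : ℝ} (hρ : 0 < ρ) :
    ENNReal.ofReal (h1Mass m) * ‖(h1f m ρ)⁻¹ • z ρ‖ₑ
      ≤ ∫⁻ t in Ioi 0, ENNReal.ofReal (h1f m t)⁻¹ * ‖L0op m z dz t‖ₑ *
          ∫⁻ s in {s | t ∈ uIoc ρ s} ∩ Ioi 0, ENNReal.ofReal (h1f m s ^ 2 * s) := by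
  have hE := measurableSet_mem_uIoc ρ
  have hg : AEMeasurable (fun t => ENNReal.ofReal (h1f m t)⁻¹ * ‖L0op m z dz t‖ₑ)
      (volume.restrict (Ioi 0)) :=
    ((continuousOn_inv_h1f m).aemeasurable measurableSet_Ioi).ennreal_ofReal.mul
      (h.aestronglyMeasurable_L0op m).enorm
  calc ENNReal.ofReal (h1Mass m) * ‖(h1f m ρ)⁻¹ • z ρ‖ₑ
      = ‖∫ s in Ioi (0 : ℝ), (h1f m s ^ 2 * s) • ((h1f m ρ)⁻¹ • z ρ - (h1f m s)⁻¹ • z s)‖ₑ := by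
        rw [integral_h1f_sq_smul_sub hm hint horth, enorm_smul (h1Mass m),
          Real.enorm_of_nonneg (h1Mass_pos hm).le]
    _ ≤ ∫⁻ s in Ioi 0, ENNReal.ofReal (h1f m s ^ 2 * s) *
          ∫⁻ t in {t | t ∈ uIoc ρ s},
            ENNReal.ofReal (h1f m t)⁻¹ * ‖L0op m z dz t‖ₑ ∂volume.restrict (Ioi 0) := by
        refine (enorm_integral_le_lintegral_enorm _).trans
          (setLIntegral_mono' measurableSet_Ioi fun s hs => ?_)
        rw [enorm_smul, Real.enorm_of_nonneg (mul_nonneg (sq_nonneg _) (mem_Ioi.1 hs).le)]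
        gcongr
        refine (h.enorm_inv_h1f_smul_sub_le m hρ hs).trans_eq ?_
        have hsub : uIoc ρ s ⊆ Ioi 0 := fun t ht => (lt_min hρ hs).trans ht.1
        rw [ofPred_mem_eq, Measure.restrict_restrict measurableSet_uIoc, inter_eq_left.2 hsub]
    _ = _ := by
        refine (lintegral_mul_setLIntegral_swap hE
          (integrableOn_h1f_sq_mul hm).aemeasurable.ennreal_ofReal hg).trans ?_
        refine lintegral_congr fun t => ?_
        have hEt : MeasurableSet {s | (s, t) ∈ {q : ℝ × ℝ | q.2 ∈ uIoc ρ q.1}} :=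
          measurable_prodMk_right hE
        rw [Measure.restrict_restrict hEt]
        rfl

theorem ofReal_h1Mass_mul_enorm_le_lintegral_radialKernel (h : LocACC z dz) (hm : 3 ≤ m)
    (hint : IntegrableOn (fun s => z s * ((h1f m s * s : ℝ) : ℂ)) (Ioi 0))
    (horth : ∫ s in Ioi (0 : ℝ), z s * ((h1f m s * s : ℝ) : ℂ) = 0) {ρ : ℝ} (hρ : 0 < ρ) :
    ENNReal.ofReal (h1Mass m) * ‖(h1f m ρ)⁻¹ • z ρ‖ₑ
      ≤ ENNReal.ofReal ((h1Mass m + 1) * (h1f m ρ)⁻¹ * ρ) *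
          ∫⁻ t, ENNReal.ofReal (radialKernel ρ t) * ‖L0op m z dz t‖ₑ ∂radialMeasure := by
  have hm_two : 2 ≤ m := by lia
  have hconst : 0 ≤ (h1Mass m + 1) * (h1f m ρ)⁻¹ * ρ :=
    mul_nonneg (mul_nonneg (by linarith [h1Mass_pos hm_two]) (inv_pos.2 (h1f_pos m hρ)).le) hρ.le
  refine (h.ofReal_h1Mass_mul_enorm_le hm_two hint horth hρ).trans ?_
  rw [lintegral_radialMeasure, ← lintegral_const_mul' _ _ ENNReal.ofReal_ne_top]
  refine setLIntegral_mono' measurableSet_Ioi fun t ht => ?_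
  rw [mul_right_comm]
  grw [ofReal_inv_h1f_mul_setLIntegral_le_radialKernel hm hρ ht]
  rw [← mul_assoc _ ρ, ENNReal.ofReal_mul hconst, ENNReal.ofReal_mul (mem_Ioi.1 ht).le]
  ring_nf
  rfl

theorem enorm_norm_div_le_lintegral_radialKernel (h : LocACC z dz) (hm : 3 ≤ m)
    (hint : IntegrableOn (fun s => z s * ((h1f m s * s : ℝ) : ℂ)) (Ioi 0))
    (horth : ∫ s in Ioi (0 : ℝ), z s * ((h1f m s * s : ℝ) : ℂ) = 0) {ρ : ℝ} (hρ : 0 < ρ) :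
    ‖‖z ρ‖ / ρ‖ₑ ≤ ENNReal.ofReal ((h1Mass m + 1) / h1Mass m) *
      ∫⁻ t, ENNReal.ofReal (radialKernel ρ t) * ‖L0op m z dz t‖ₑ ∂radialMeasure := by
  have hmass : 0 < h1Mass m := h1Mass_pos (by lia)
  have hh := h1f_pos m hρ
  have hinv := inv_pos.2 hh
  calc ‖‖z ρ‖ / ρ‖ₑ
      = ENNReal.ofReal (h1f m ρ / (h1Mass m * ρ)) *
          (ENNReal.ofReal (h1Mass m) * ‖(h1f m ρ)⁻¹ • z ρ‖ₑ) := by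
        rw [Real.enorm_of_nonneg (by positivity), ← ofReal_norm, norm_smul,
          Real.norm_of_nonneg hinv.le, ← ENNReal.ofReal_mul hmass.le,
          ← ENNReal.ofReal_mul (by positivity)]
        congr 1
        field_simp
    _ ≤ ENNReal.ofReal (h1f m ρ / (h1Mass m * ρ)) * _ :=
        mul_le_mul_right
          (h.ofReal_h1Mass_mul_enorm_le_lintegral_radialKernel hm hint horth hρ) _
    _ = _ := by
        rw [← mul_assoc, ← ENNReal.ofReal_mul (by positivity)]
        congr 2
        field_simp

end LocACC

section Coercivity

variable {m : ℕ}

theorem norm_h3f_mul_le (m : ℕ) {ρ : ℝ} (hρ : 0 < ρ) (w : ℂ) :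
    ‖(((m : ℝ) / ρ * h3f m ρ : ℝ) : ℂ) * w‖ ≤ m * (‖w‖ / ρ) := by
  have hcoef : 0 ≤ (m : ℝ) / ρ := by positivity
  rw [norm_mul, Complex.norm_real, norm_mul, Real.norm_of_nonneg hcoef, Real.norm_eq_abs]
  calc (m : ℝ) / ρ * |h3f m ρ| * ‖w‖ ≤ (m : ℝ) / ρ * 1 * ‖w‖ := by
        gcongr
        exact abs_h3f_le_one m hρ
    _ = m * (‖w‖ / ρ) := by ring

theorem norm_L0op_le (m : ℕ) (z dz : ℝ → ℂ) {ρ : ℝ} (hρ : 0 < ρ) :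
    ‖L0op m z dz ρ‖ ≤ ‖dz ρ‖ + m * (‖z ρ‖ / ρ) := by
  grw [L0op, norm_add_le, norm_h3f_mul_le m hρ]

theorem norm_le_norm_L0op_add (m : ℕ) (z dz : ℝ → ℂ) {ρ : ℝ} (hρ : 0 < ρ) :
    ‖dz ρ‖ ≤ ‖L0op m z dz ρ‖ + m * (‖z ρ‖ / ρ) := by
  have hdz : dz ρ = L0op m z dz ρ - (((m : ℝ) / ρ * h3f m ρ : ℝ) : ℂ) * z ρ := by
    rw [L0op, add_sub_cancel_right]
  rw [hdz]
  grw [norm_sub_le, norm_h3f_mul_le m hρ]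

theorem h1f_mul_le_two_mul_radialKernel (hm : 3 ≤ m) {y : ℝ} (hy : 0 < y) :
    h1f m y * y ≤ 2 * radialKernel 1 y := by
  rw [radialKernel, one_pow, div_one, mul_min_of_nonneg _ _ zero_le_two]
  refine le_min ?_ ?_
  · have hzero : h1f m y ≤ 2 * y ^ (0 : ℤ) := h1f_le_two_mul_zpow m (by simp) hy
    rw [zpow_zero, mul_one] at hzero
    gcongr
  · have hthree : h1f m y ≤ 2 * y ^ (-3 : ℤ) := h1f_le_two_mul_zpow m (by simpa using hm) hy
    calc h1f m y * y ≤ 2 * y ^ (-3 : ℤ) * y := by gcongr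
      _ = 2 * (1 / y ^ 2) := by
          rw [show (-3 : ℤ) = -(3 : ℕ) from rfl, zpow_neg, zpow_natCast]
          field_simp

theorem integrableOn_mul_h1f (hm : 3 ≤ m) {p : ℝ} (hp : 1 ≤ p) {z : ℝ → ℂ}
    (hz : ContinuousOn z (Ioi 0))
    (hzp : MemLp (fun ρ => ‖z ρ‖ / ρ) (ENNReal.ofReal p) radialMeasure) :
    IntegrableOn (fun ρ => z ρ * ((h1f m ρ * ρ : ℝ) : ℂ)) (Ioi 0) := by
  have hfinite := lintegral_radialKernel_mul_lt_top hp hzp.1.enorm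
    (by rw [eLpNorm_enorm]; exact hzp.2.ne) one_pos
  refine ⟨(hz.mul (Complex.continuous_ofReal.comp_continuousOn
    ((continuousOn_h1f m).mul continuousOn_id))).aestronglyMeasurable measurableSet_Ioi,
    lt_of_le_of_lt ?_ (ENNReal.mul_lt_top (ENNReal.ofReal_lt_top (r := 2)) hfinite)⟩
  rw [lintegral_radialMeasure, ← lintegral_const_mul' _ _ ENNReal.ofReal_ne_top]
  refine setLIntegral_mono' measurableSet_Ioi fun ρ hρ => ?_
  have hρ_pos : 0 < ρ := hρ
  have hh := h1f_pos m hρ_pos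
  have hk := radialKernel_pos one_pos hρ_pos
  rw [← ofReal_norm, Real.enorm_of_nonneg (by positivity), ← ENNReal.ofReal_mul (by positivity),
    ← ENNReal.ofReal_mul (by positivity), ← ENNReal.ofReal_mul (by positivity)]
  refine ENNReal.ofReal_le_ofReal ?_
  rw [norm_mul, Complex.norm_real, Real.norm_of_nonneg (by positivity)]
  calc ‖z ρ‖ * (h1f m ρ * ρ) ≤ ‖z ρ‖ * (2 * radialKernel 1 ρ) := by
        gcongr ‖z ρ‖ * ?_
        exact h1f_mul_le_two_mul_radialKernel hm hρ_pos
    _ = 2 * (ρ * (radialKernel 1 ρ * (‖z ρ‖ / ρ))) := by field_simp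

theorem exists_eLpNorm_norm_div_le (hm : 3 ≤ m) {p : ℝ} (hp : 1 ≤ p) :
    ∃ K : NNReal, ∀ z dz : ℝ → ℂ, LocACC z dz →
      MemLp (fun ρ => ‖z ρ‖ / ρ) (ENNReal.ofReal p) radialMeasure →
      ∫ ρ in Ioi (0 : ℝ), z ρ * ((h1f m ρ * ρ : ℝ) : ℂ) = 0 →
      eLpNorm (fun ρ => ‖z ρ‖ / ρ) (ENNReal.ofReal p) radialMeasure
        ≤ K * eLpNorm (L0op m z dz) (ENNReal.ofReal p) radialMeasure := by
  obtain ⟨K, hK⟩ := exists_eLpNorm_lintegral_radialKernel_le hp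
  set D : NNReal := ((h1Mass m + 1) / h1Mass m).toNNReal
  refine ⟨D * K, fun z dz h hzp horth => ?_⟩
  have hint := integrableOn_mul_h1f hm hp h.continuousOn hzp
  have hL0 := (h.aestronglyMeasurable_L0op m).mono_ac radialMeasure_absolutelyContinuous
  calc eLpNorm (fun ρ => ‖z ρ‖ / ρ) (ENNReal.ofReal p) radialMeasure
      ≤ D * eLpNorm (fun ρ => ∫⁻ t, ENNReal.ofReal (radialKernel ρ t) * ‖L0op m z dz t‖ₑ
          ∂radialMeasure) (ENNReal.ofReal p) radialMeasure :=
        eLpNorm_le_nnreal_smul_eLpNorm_of_ae_le_mul' (ae_radialMeasure_pos.mono fun ρ hρ =>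
          h.enorm_norm_div_le_lintegral_radialKernel hm hint horth hρ) _
    _ ≤ D * (K * eLpNorm (L0op m z dz) (ENNReal.ofReal p) radialMeasure) := by
        grw [hK _ hL0.enorm, eLpNorm_enorm]
    _ = _ := by rw [ENNReal.coe_mul, mul_assoc]

theorem exists_eLpNorm_norm_deriv_add_norm_div_le (hm : 3 ≤ m) {p : ℝ} (hp : 1 ≤ p) :
    ∃ C : NNReal, 0 < C ∧ ∀ z dz : ℝ → ℂ, LocACC z dz →
      MemLp (fun ρ => ‖z ρ‖ / ρ) (ENNReal.ofReal p) radialMeasure →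
      ∫ ρ in Ioi (0 : ℝ), z ρ * ((h1f m ρ * ρ : ℝ) : ℂ) = 0 →
      eLpNorm (fun ρ => ‖dz ρ‖ + ‖z ρ‖ / ρ) (ENNReal.ofReal p) radialMeasure
        ≤ C * eLpNorm (L0op m z dz) (ENNReal.ofReal p) radialMeasure := by
  obtain ⟨K, hK⟩ := exists_eLpNorm_norm_div_le hm hp
  refine ⟨1 + (m + 1) * K, by positivity, fun z dz h hzp horth => ?_⟩
  have hL0 := (h.aestronglyMeasurable_L0op m).mono_ac radialMeasure_absolutelyContinuous
  calc eLpNorm (fun ρ => ‖dz ρ‖ + ‖z ρ‖ / ρ) (ENNReal.ofReal p) radialMeasure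
      ≤ eLpNorm ((fun ρ => ‖L0op m z dz ρ‖) + ((m : ℝ) + 1) • fun ρ => ‖z ρ‖ / ρ)
          (ENNReal.ofReal p) radialMeasure := by
        refine eLpNorm_mono_ae_real (ae_radialMeasure_pos.mono fun ρ hρ => ?_)
        rw [Real.norm_of_nonneg (by positivity)]
        simp only [Pi.add_apply, Pi.smul_apply, smul_eq_mul]
        linarith [norm_le_norm_L0op_add m z dz hρ]
    _ ≤ eLpNorm (L0op m z dz) (ENNReal.ofReal p) radialMeasure
          + (m + 1) * eLpNorm (fun ρ => ‖z ρ‖ / ρ) (ENNReal.ofReal p) radialMeasure := by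
        refine (eLpNorm_add_le hL0.norm (hzp.1.const_smul _)
          (ENNReal.one_le_ofReal.2 hp)).trans_eq ?_
        rw [eLpNorm_norm, eLpNorm_const_smul, Real.enorm_of_nonneg (by positivity),
          ENNReal.ofReal_add (by positivity) zero_le_one, ENNReal.ofReal_natCast,
          ENNReal.ofReal_one]
    _ ≤ _ := by
        grw [hK z dz h hzp horth]
        push_cast
        exact (by ring : _ = _).le

theorem LocACC.memLp_L0op {z dz : ℝ → ℂ} (h : LocACC z dz) (m : ℕ) {q : ℝ≥0∞}
    (hdz : MemLp dz q radialMeasure) (hz : MemLp (fun ρ => ‖z ρ‖ / ρ) q radialMeasure) :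
    MemLp (L0op m z dz) q radialMeasure :=
  (hdz.norm.add (hz.const_mul (m : ℝ))).mono'
    ((h.aestronglyMeasurable_L0op m).mono_ac radialMeasure_absolutelyContinuous)
    (ae_radialMeasure_pos.mono fun _ hρ => norm_L0op_le m z dz hρ)

theorem LocACC.aestronglyMeasurable_norm_div {z dz : ℝ → ℂ} (h : LocACC z dz) :
    AEStronglyMeasurable (fun ρ => ‖z ρ‖ / ρ) (volume.restrict (Ioi 0)) :=
  (h.continuousOn.norm.div continuousOn_id fun _ hρ => (mem_Ioi.1 hρ).ne').aestronglyMeasurable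
    measurableSet_Ioi

end Coercivity

theorem statement10_general (m : ℕ) (hm : 3 ≤ m) (p : ℝ) (hp : 1 ≤ p) :
    ∃ C > (0:ℝ), ∀ z dz : ℝ → ℂ,
      LocACC z dz →
      IntegrableOn (fun ρ => ‖dz ρ‖ ^ p * ρ) (Ioi (0:ℝ)) →
      IntegrableOn (fun ρ => (‖z ρ‖ / ρ) ^ p * ρ) (Ioi (0:ℝ)) →
      (∫ ρ in Ioi (0:ℝ), z ρ * ((h1f m ρ * ρ : ℝ) : ℂ)) = 0 →
      (∫ ρ in Ioi (0:ℝ), (‖dz ρ‖ + ‖z ρ‖ / ρ) ^ p * ρ) ^ (1 / p)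
        ≤ C * (∫ ρ in Ioi (0:ℝ), ‖L0op m z dz ρ‖ ^ p * ρ) ^ (1 / p) := by
  have hp_pos : 0 < p := by linarith
  obtain ⟨C, hC, hbound⟩ := exists_eLpNorm_norm_deriv_add_norm_div_le hm hp
  refine ⟨C, hC, fun z dz h hdz hz horth => ?_⟩
  have habs {f : ℝ → ℝ} (hf : ∀ ρ ∈ Ioi 0, 0 ≤ f ρ) : EqOn (fun ρ => ‖f ρ‖ ^ p * ρ)
      (fun ρ => f ρ ^ p * ρ) (Ioi 0) := fun ρ hρ => by
    simp only [Real.norm_of_nonneg (hf ρ hρ)]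
  have hquot : ∀ ρ ∈ Ioi (0 : ℝ), 0 ≤ ‖z ρ‖ / ρ := fun ρ hρ =>
    div_nonneg (norm_nonneg _) (mem_Ioi.1 hρ).le
  have hsum : ∀ ρ ∈ Ioi (0 : ℝ), 0 ≤ ‖dz ρ‖ + ‖z ρ‖ / ρ := fun ρ hρ =>
    add_nonneg (norm_nonneg _) (hquot ρ hρ)
  have hdz_memLp := memLp_radialMeasure hp_pos h.aestronglyMeasurable_deriv hdz
  have hz_memLp := memLp_radialMeasure hp_pos h.aestronglyMeasurable_norm_div
    (hz.congr_fun (habs hquot).symm measurableSet_Ioi)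
  have hL0_memLp := h.memLp_L0op m hdz_memLp hz_memLp
  have hreal := ENNReal.toReal_mono (ENNReal.mul_ne_top ENNReal.coe_ne_top hL0_memLp.2.ne)
    (hbound z dz h hz_memLp horth)
  rwa [ENNReal.toReal_mul, ENNReal.coe_toReal,
    toReal_eLpNorm_radialMeasure hp_pos (h.aestronglyMeasurable_L0op m),
    toReal_eLpNorm_radialMeasure hp_pos
      (h.aestronglyMeasurable_deriv.norm.fun_add h.aestronglyMeasurable_norm_div),
    setIntegral_congr_fun measurableSet_Ioi (habs hsum)] at hreal

/-- **Coercivity of L₀ under orthogonality to h₁ (Lᵖ version).** For m ≥ 3 and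
2 ≤ p < ∞ there is C = C(m,p) such that if z has finite X-norm, z' and z/ρ lie in
Lᵖ(ρ dρ), and ∫ z h₁ ρ dρ = 0, then ‖|z'| + |z|/ρ‖_{Lᵖ(ρ dρ)} ≤ C ‖L₀z‖_{Lᵖ(ρ dρ)}. -/
theorem statement10 (m : ℕ) (hm : 3 ≤ m) (p : ℝ) (hp : 2 ≤ p) :
    ∃ C > (0:ℝ), ∀ z dz : ℝ → ℂ,
      LocACC z dz →
      IntegrableOn (xDen z dz) (Ioi (0:ℝ)) →
      IntegrableOn (fun ρ => ‖dz ρ‖ ^ p * ρ) (Ioi (0:ℝ)) →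
      IntegrableOn (fun ρ => (‖z ρ‖ / ρ) ^ p * ρ) (Ioi (0:ℝ)) →
      (∫ ρ in Ioi (0:ℝ), z ρ * ((h1f m ρ * ρ : ℝ) : ℂ)) = 0 →
      (∫ ρ in Ioi (0:ℝ), (‖dz ρ‖ + ‖z ρ‖ / ρ) ^ p * ρ) ^ (1 / p)
        ≤ C * (∫ ρ in Ioi (0:ℝ), ‖L0op m z dz ρ‖ ^ p * ρ) ^ (1 / p) := by
  obtain ⟨C, hC, hbound⟩ := statement10_general m hm p (one_le_two.trans hp)
  exact ⟨C, hC, fun z dz h _ => hbound z dz h⟩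

end
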